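/- Let X be a Grothendieck category satisfying (AB4*) (products are exact), let Y be a localizing subcategory of X, and let π : X → X/Y be the quotient functor. Then the assignments Z ↦ π(Z) and 𝒵 ↦ (π^{-1}(𝒵))' restrict to mutually inverse bijections between the Y-closed subcategories of X and the closed subcategories of X/Y. -/

import Mathlib

open CategoryTheory CategoryTheory.Limits Opposite

universe v u

namespace Paper

variable {C : Type u} [Category.{v} C]

/-- An object `M` is compact if `Hom(M, -)` commutes with arbitrary (small) direct sums. -/
def IsCompactObj (M : C) : Prop :=
  ∀ ι : Type v, Nonempty (PreservesColimitsOfShape (Discrete ι) (coyoneda.obj (op M)))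

variable [Abelian C]

section
variable [HasColimits C]

/-- A full subcategory (given by its set of objects) is weakly closed if it is closed
under subobjects, quotient objects and arbitrary (small) direct sums. -/
structure IsWeaklyClosed (Z : Set C) : Prop where
  mem_of_mono : ∀ {A M : C} (f : A ⟶ M), Mono f → M ∈ Z → A ∈ Z
  mem_of_epi : ∀ {M B : C} (f : M ⟶ B), Epi f → M ∈ Z → B ∈ Z
  sigma_mem : ∀ {ι : Type v} (f : ι → C), (∀ i, f i ∈ Z) → (∐ f) ∈ Z

/-- Closure under arbitrary (small) products. -/
def ClosedUnderProducts [HasLimits C] (Z : Set C) : Prop :=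
  ∀ {ι : Type v} (f : ι → C), (∀ i, f i ∈ Z) → (∏ᶜ f) ∈ Z

/-- A closed subcategory: weakly closed and closed under products. -/
def IsClosedSub [HasLimits C] (Z : Set C) : Prop :=
  IsWeaklyClosed Z ∧ ClosedUnderProducts Z

/-- Closure under extensions. -/
def ClosedUnderExtensions (Y : Set C) : Prop :=
  ∀ S : ShortComplex C, S.ShortExact → S.X₁ ∈ Y → S.X₃ ∈ Y → S.X₂ ∈ Y

/-- A localizing subcategory: weakly closed and closed under extensions. -/
def IsLocalizing (Y : Set C) : Prop :=
  IsWeaklyClosed Y ∧ ClosedUnderExtensions Y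

/-- The full subcategory generated by a class of objects `G`: all quotient objects
of (small) direct sums of objects of `G`. -/
def generatedBy (G : Set C) : Set C :=
  { M | ∃ (ι : Type v) (f : ι → C), (∀ i, f i ∈ G) ∧ ∃ p : (∐ f) ⟶ M, Epi p }

end

/-- A filter of subobjects of an object: nonempty, upward closed, and closed under
finite intersections. -/
def IsFilterOn {O : C} (F : Set (Subobject O)) : Prop :=
  F.Nonempty ∧ (∀ {I J : Subobject O}, I ∈ F → I ≤ J → J ∈ F) ∧
    ∀ {I J : Subobject O}, I ∈ F → J ∈ F → I ⊓ J ∈ F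

/-- A principal filter consists of all subobjects containing a fixed one. -/
def IsPrincipalFilter {O : C} (F : Set (Subobject O)) : Prop :=
  ∃ I : Subobject O, F = { J | I ≤ J }

variable {A : Type v}

/-- A filter system in a family of objects. -/
def IsFilterSystem (O : A → C) (F : ∀ α, Set (Subobject (O α))) : Prop :=
  (∀ α, IsFilterOn (F α)) ∧
    ∀ (α β : A) (f : O α ⟶ O β), ∀ J ∈ F β, (Subobject.pullback f).obj J ∈ F α

/-- An ideal in a family of generators: a choice of subobject `I α ⊆ O α` for each `α`
such that `f (I α) ⊆ I β` for every morphism `f : O α ⟶ O β`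
(expressed as `I α ≤ f⁻¹ (I β)`). -/
def IsIdealIn (O : A → C) (I : ∀ α, Subobject (O α)) : Prop :=
  ∀ (α β : A) (f : O α ⟶ O β), I α ≤ (Subobject.pullback f).obj (I β)

/-- The quotient object `O/I` of `O` by a subobject `I`. -/
noncomputable def quotBy {O : C} (I : Subobject O) : C := cokernel I.arrow

/-- The weakly closed subcategory generated by the objects `O α / I`, `I ∈ F α`. -/
def wcOfFilterSystem [HasColimits C] (O : A → C) (F : ∀ α, Set (Subobject (O α))) : Set C :=
  generatedBy { M | ∃ (α : A) (I : Subobject (O α)), I ∈ F α ∧ Nonempty (quotBy I ≅ M) }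

/-- The filter system associated to a subcategory `Z`: `F α = {I | O α / I ∈ Z}`. -/
def filterOf (O : A → C) (Z : Set C) (α : A) : Set (Subobject (O α)) :=
  { I | quotBy I ∈ Z }

section QuotientCat

variable {D : Type u} [Category.{v} D]

/-- The image `π(Z)` of a subcategory, as a full subcategory of the target
(closed under isomorphism). -/
def imageSub (π : C ⥤ D) (Z : Set C) : Set D := { N | ∃ M ∈ Z, Nonempty (π.obj M ≅ N) }

/-- The preimage `π⁻¹(𝒵)` of a subcategory. -/
def preimageSub (π : C ⥤ D) (Z : Set D) : Set C := { M | π.obj M ∈ Z }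

/-- `M` is `Y`-torsionfree if it has no nonzero subobject belonging to `Y`. -/
def IsTorsionFree (Y : Set C) (M : C) : Prop :=
  ∀ (N : C) (f : N ⟶ M), Mono f → N ∈ Y → IsZero N

/-- `Z` is `Y`-essentially stable if `ωπ(M) ∈ Z` for all `M ∈ Z`. -/
def EssStable (π : C ⥤ D) (ω : D ⥤ C) (Z : Set C) : Prop :=
  ∀ M ∈ Z, ω.obj (π.obj M) ∈ Z

/-- `Z'`: the full subcategory generated by the `Y`-torsionfree objects of `Z`. -/
def torsPart [HasColimits C] (Y Z : Set C) : Set C :=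
  generatedBy { M | M ∈ Z ∧ IsTorsionFree Y M }

/-- `Z` is `Y`-torsionfree generated if every object of `Z` is a quotient of a direct sum
of `Y`-torsionfree objects of `Z`. -/
def TorsionfreeGenerated [HasColimits C] (Y Z : Set C) : Prop :=
  Z ⊆ torsPart Y Z

/-- `Z` is `Y`-weakly closed: weakly closed, `Y`-essentially stable
and `Y`-torsionfree generated. -/
def IsYWeaklyClosed [HasColimits C] (π : C ⥤ D) (ω : D ⥤ C) (Y Z : Set C) : Prop :=
  IsWeaklyClosed Z ∧ EssStable π ω Z ∧ TorsionfreeGenerated Y Z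

/-- `Z` is `Y`-closed: closed, `Y`-essentially stable and `Y`-torsionfree generated. -/
def IsYClosed [HasLimits C] [HasColimits C] (π : C ⥤ D) (ω : D ⥤ C) (Y Z : Set C) : Prop :=
  IsClosedSub Z ∧ EssStable π ω Z ∧ TorsionfreeGenerated Y Z

end QuotientCat

/-- The Gabriel product `Z * W`: all objects `P` fitting in a short exact sequence
`0 → M → P → N → 0` with `M ∈ W` and `N ∈ Z`. -/
def gabrielProd (Z W : Set C) : Set C :=
  { P | ∃ S : ShortComplex C, S.ShortExact ∧ S.X₁ ∈ W ∧ S.X₃ ∈ Z ∧ Nonempty (S.X₂ ≅ P) }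

/-- `Isat` is the `Y`-saturation of `I` inside `O`: the largest subobject `J ⊇ I`
with `J/I ∈ Y`; that is, `Isat/I = τ(O/I)`. -/
def IsSaturationOf (Y : Set C) {O : C} (I Isat : Subobject O) : Prop :=
  ∃ h : I ≤ Isat, cokernel (Subobject.ofLE I Isat h) ∈ Y ∧
    ∀ (J : Subobject O) (hJ : I ≤ J), cokernel (Subobject.ofLE I J hJ) ∈ Y → J ≤ Isat


/-- The subcategory generated by the objects `O α / I α` for an ideal `I`. -/
def wcOfIdeal [HasColimits C] (O : A → C) (I : ∀ α, Subobject (O α)) : Set C :=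
  generatedBy { M | ∃ α : A, Nonempty (quotBy (I α) ≅ M) }

/-- The union `Z₁ ∪ Z₂` of two weakly closed subcategories: explicitly, all
subquotients of objects `M ⊞ N` with `M ∈ Z₁` and `N ∈ Z₂`. -/
def unionWC (Z₁ Z₂ : Set C) : Set C :=
  { P | ∃ (M N Q : C) (i : Q ⟶ M ⊞ N) (p : Q ⟶ P), M ∈ Z₁ ∧ N ∈ Z₂ ∧ Mono i ∧ Epi p }

section Helpers

/-- In an (AB5) abelian category, a direct sum embeds in the product. -/
lemma exists_mono_sigma_pi {X : Type u} [Category.{v} X] [Abelian X]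
    [HasLimits X] [HasColimits X] [HasFilteredColimits X] [AB5 X]
    {ι : Type v} (f : ι → X) : ∃ m : (∐ f) ⟶ ∏ᶜ f, Mono m := by
  classical
  let a : ∀ i, f i ⟶ ∏ᶜ f := fun i => Pi.lift (Pi.single i (𝟙 (f i)))
  have ha : ∀ i, a i ≫ Pi.π f i = 𝟙 _ := fun i => by simp [a]
  have ha' : ∀ i j, i ≠ j → a i ≫ Pi.π f j = 0 := fun i j h => by
    simp [a, Pi.single_eq_of_ne (Ne.symm h)]
  refine ⟨Sigma.desc a, ?_⟩
  let F := CoproductsFromFiniteFiltered.liftToFinsetObj (Discrete.functor f)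
  let φ : F ⟶ (Functor.const _).obj (∏ᶜ f) :=
    { app := fun S => Sigma.desc (fun x : S => a x.1.as)
      naturality := fun S T h => by
        apply Sigma.hom_ext
        intro x
        have e1 : Sigma.ι (fun x : S => f x.1.as) x ≫ F.map h =
            Sigma.ι (fun x : T => f x.1.as) ⟨x.1, h.down.down x.2⟩ := Sigma.ι_desc _ _
        have e2 : Sigma.ι (fun x : S => f x.1.as) x ≫ Sigma.desc (fun x : S => a x.1.as) =
            a x.1.as := Sigma.ι_desc _ _
        have e3 : Sigma.ι (fun x : T => f x.1.as) ⟨x.1, h.down.down x.2⟩ ≫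
            Sigma.desc (fun x : T => a x.1.as) = a x.1.as := Sigma.ι_desc _ _
        refine (Category.assoc _ _ _).symm.trans ?_
        refine (congrArg (· ≫ Sigma.desc (fun x : T => a x.1.as)) e1).trans (e3.trans ?_)
        exact e2.symm.trans (congrArg (_ ≫ ·) (Category.comp_id _).symm) }
  have hφ : ∀ S, Mono (φ.app S) := fun S => by
    let b : (∐ fun x : S => f x.1.as) ⟶ ∏ᶜ f := Sigma.desc (fun x : S => a x.1.as)
    let r : (∏ᶜ f) ⟶ ∐ fun x : S => f x.1.as :=
      ∑ x : S, Pi.π f x.1.as ≫ Sigma.ι (fun x : S => f x.1.as) x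
    have : b ≫ r = 𝟙 _ := by
      apply Sigma.hom_ext
      intro x
      simp only [b, r, Preadditive.comp_sum, colimit.ι_desc_assoc, Cofan.mk_ι_app]
      rw [Finset.sum_eq_single x]
      · rw [reassoc_of% (ha x.1.as)]
        exact (Category.comp_id _).symm
      · intro y _ hy
        rw [reassoc_of% (ha' x.1.as y.1.as (fun h => hy (by
          apply Subtype.ext; apply Discrete.ext; exact h.symm)))]
        simp
      · simp
    have hb : Mono b := mono_of_mono_fac this
    exact hb
  have : Mono φ := NatTrans.mono_of_mono_app φ
  have : IsConnected (Finset (Discrete ι)) := IsFiltered.isConnected _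
  refine colim.map_mono' φ
    (CoproductsFromFiniteFiltered.isColimitFiniteSubproductsCocone f)
    (isColimitConstCocone _ _) (Sigma.desc a) ?_
  intro S
  apply Sigma.hom_ext
  intro x
  have e1 : Sigma.ι (fun x : S => f x.1.as) x ≫ Sigma.desc (fun x : S => Sigma.ι f x.1.as) =
      Sigma.ι f x.1.as := Sigma.ι_desc _ _
  have e2 : Sigma.ι (fun x : S => f x.1.as) x ≫ Sigma.desc (fun x : S => a x.1.as) =
      a x.1.as := Sigma.ι_desc _ _
  have e3 : Sigma.ι f x.1.as ≫ Sigma.desc a = a x.1.as := Sigma.ι_desc _ _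
  refine (Category.assoc _ _ _).symm.trans ?_
  refine (congrArg (· ≫ Sigma.desc a) e1).trans (e3.trans ?_)
  exact e2.symm.trans (congrArg (_ ≫ ·) (Category.comp_id _).symm)

lemma IsWeaklyClosed.iso_mem {X : Type u} [Category.{v} X] [Abelian X] [HasColimits X]
    {Z : Set X} (hZ : IsWeaklyClosed Z) {A B : X} (e : A ≅ B) (h : A ∈ Z) : B ∈ Z :=
  hZ.mem_of_mono e.inv inferInstance h

lemma epi_pi_map {X : Type u} [Category.{v} X] [Abelian X] [HasLimits X]
    [HasProducts X] [AB4Star X] {ι : Type v} {f g : ι → X} (p : ∀ i, f i ⟶ g i)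
    (hp : ∀ i, Epi (p i)) : Epi (Limits.Pi.map p) := by
  have : Epi (Discrete.natTrans (F := Discrete.functor f) (G := Discrete.functor g)
      (fun i => p i.as)) := by
    have : ∀ i, Epi ((Discrete.natTrans (F := Discrete.functor f) (G := Discrete.functor g)
      (fun i => p i.as)).app i) := fun i => hp i.as
    exact NatTrans.epi_of_epi_app _
  exact (lim : (Discrete ι ⥤ X) ⥤ X).map_epi (Discrete.natTrans (F := Discrete.functor f) (G := Discrete.functor g)
      (fun i => p i.as))

lemma generatedBy_epi {X : Type u} [Category.{v} X] [Abelian X] [HasColimits X]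
    {G : Set X} {M B : X} (q : M ⟶ B) [Epi q] (h : M ∈ generatedBy G) : B ∈ generatedBy G := by
  obtain ⟨ι, f, hf, p, hp⟩ := h
  exact ⟨ι, f, hf, p ≫ q, epi_comp _ _⟩

lemma subset_generatedBy {X : Type u} [Category.{v} X] [Abelian X] [HasColimits X]
    {G : Set X} : G ⊆ generatedBy G := fun M hM =>
  ⟨PUnit, fun _ => M, fun _ => hM, Sigma.desc (fun _ => 𝟙 M),
    epi_of_epi_fac (Sigma.ι_desc (fun _ : PUnit.{v+1} => 𝟙 M) PUnit.unit)⟩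

lemma generatedBy_mono {X : Type u} [Category.{v} X] [Abelian X] [HasColimits X]
    {G H : Set X} (h : G ⊆ H) : generatedBy G ⊆ generatedBy H := by
  rintro M ⟨ι, f, hf, p, hp⟩
  exact ⟨ι, f, fun i => h (hf i), p, hp⟩

lemma generatedBy_subset {X : Type u} [Category.{v} X] [Abelian X] [HasColimits X]
    {G Z : Set X} (hZ : IsWeaklyClosed Z) (h : G ⊆ Z) : generatedBy G ⊆ Z := by
  rintro M ⟨ι, f, hf, p, hp⟩
  exact hZ.mem_of_epi p hp (hZ.sigma_mem f fun i => h (hf i))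

variable {X : Type u} [Category.{v} X] [Abelian X]
    {D : Type u} [Category.{v} D] [Abelian D]
    {Y : Set X} {π : X ⥤ D} {ω : D ⥤ X}

lemma isTorsionFree_of_mono (adj : π ⊣ ω) (hker : ∀ M : X, M ∈ Y ↔ IsZero (π.obj M))
    {M : X} {N : D} (g : M ⟶ ω.obj N) [Mono g] : IsTorsionFree Y M := by
  intro T f hf hT
  have h0 : IsZero (π.obj T) := (hker T).1 hT
  have : f ≫ g = 0 := by
    apply (adj.homEquiv T N).symm.injective
    exact h0.eq_of_src _ _
  have hf0 : f = 0 := by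
    rw [← cancel_mono g, this, zero_comp]
  exact IsZero.of_mono_eq_zero f hf0

lemma IsTorsionFree.mono_unit (adj : π ⊣ ω) [PreservesFiniteLimits π] [ω.Full] [ω.Faithful]
    (hker : ∀ M : X, M ∈ Y ↔ IsZero (π.obj M))
    {M : X} (hM : IsTorsionFree Y M) : Mono (adj.unit.app M) := by
  have hiso : IsIso (π.map (adj.unit.app M)) := inferInstance
  have h1 : π.map (kernel.ι (adj.unit.app M)) = 0 := by
    have := adj.isRightAdjoint
    have := adj.isLeftAdjoint
    rw [← cancel_mono (π.map (adj.unit.app M)), ← π.map_comp, kernel.condition, zero_comp,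
      π.map_zero]
  have h2 : IsZero (π.obj (kernel (adj.unit.app M))) := IsZero.of_mono_eq_zero _ h1
  have h3 := hM _ (kernel.ι (adj.unit.app M)) inferInstance ((hker _).2 h2)
  exact Preadditive.mono_of_kernel_zero (h3.eq_of_src _ _)

variable [HasColimits D]

lemma mem_tf_iff (adj : π ⊣ ω) [PreservesFiniteLimits π] [ω.Full] [ω.Faithful]
    (hker : ∀ M : X, M ∈ Y ↔ IsZero (π.obj M)) {W : Set D} (hW : IsWeaklyClosed W) (M : X) :
    (M ∈ preimageSub π W ∧ IsTorsionFree Y M) ↔ ∃ N ∈ W, ∃ g : M ⟶ ω.obj N, Mono g := by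
  constructor
  · rintro ⟨h1, h2⟩
    exact ⟨π.obj M, h1, adj.unit.app M, h2.mono_unit adj hker⟩
  · rintro ⟨N, hN, g, hg⟩
    refine ⟨?_, isTorsionFree_of_mono adj hker g⟩
    exact hW.mem_of_mono (π.map g ≫ adj.counit.app N) (mono_comp _ _) hN

end Helpers

/-- If `X` satisfies (AB4*), the assignments `Z ↦ π(Z)` and
`𝒵 ↦ (π⁻¹(𝒵))'` restrict to mutually inverse bijections between `Y`-closed
subcategories of `X` and closed subcategories of `X/Y`. -/
theorem statement_11 {X : Type u} [Category.{v} X] [Abelian X]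
    [HasLimits X] [HasColimits X] [HasFilteredColimits X] [AB5 X]
    [HasProducts X] [AB4Star X]
    (hgen : ∃ G : X, IsSeparator G)
    {D : Type u} [Category.{v} D] [Abelian D] [HasLimits D] [HasColimits D]
    (Y : Set X) (hYloc : IsLocalizing Y)
    (π : X ⥤ D) (ω : D ⥤ X) (adj : π ⊣ ω) [PreservesFiniteLimits π]
    [ω.Full] [ω.Faithful]
    (hker : ∀ M : X, M ∈ Y ↔ IsZero (π.obj M)) :
    (∀ Z : Set X, IsYClosed π ω Y Z →
      IsClosedSub (imageSub π Z) ∧ torsPart Y (preimageSub π (imageSub π Z)) = Z) ∧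
    (∀ 𝒵 : Set D, IsClosedSub 𝒵 →
      IsYClosed π ω Y (torsPart Y (preimageSub π 𝒵)) ∧
        imageSub π (torsPart Y (preimageSub π 𝒵)) = 𝒵) := by
  have hpc : PreservesColimitsOfSize.{v, v} π := adj.leftAdjoint_preservesColimits
  have hpl : PreservesLimitsOfSize.{v, v} ω := adj.rightAdjoint_preservesLimits
  have hπl : π.IsLeftAdjoint := adj.isLeftAdjoint
  have hωr : ω.IsRightAdjoint := adj.isRightAdjoint
  constructor
  · rintro Z ⟨⟨hZw, hZp⟩, hZs, hZt⟩
    have key : ∀ N : D, N ∈ imageSub π Z ↔ ω.obj N ∈ Z := by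
      intro N
      constructor
      · rintro ⟨M, hM, ⟨e⟩⟩
        exact hZw.iso_mem (ω.mapIso e) (hZs M hM)
      · intro h
        exact ⟨_, h, ⟨asIso (adj.counit.app N)⟩⟩
    refine ⟨⟨⟨?_, ?_, ?_⟩, ?_⟩, ?_⟩
    · intro A M f hf hM
      rw [key] at hM ⊢
      exact hZw.mem_of_mono (ω.map f) inferInstance hM
    · intro M B f hf hM
      rw [key] at hM
      refine ⟨Abelian.image (ω.map f),
        hZw.mem_of_epi (Abelian.factorThruImage (ω.map f)) inferInstance hM, ?_⟩
      have h1 : Mono (π.map (Abelian.image.ι (ω.map f))) := inferInstance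
      have h2 : Epi (π.map (Abelian.image.ι (ω.map f)) ≫ adj.counit.app B) := by
        have h3 : π.map (Abelian.factorThruImage (ω.map f)) ≫
            π.map (Abelian.image.ι (ω.map f)) ≫ adj.counit.app B = adj.counit.app M ≫ f := by
          rw [← Category.assoc, ← π.map_comp, Abelian.image.fac]
          simp
        have h4 : Epi (adj.counit.app M ≫ f) := epi_comp _ _
        exact epi_of_epi_fac h3
      have h5 : Mono (π.map (Abelian.image.ι (ω.map f)) ≫ adj.counit.app B) := mono_comp _ _
      have h6 := isIso_of_mono_of_epi (π.map (Abelian.image.ι (ω.map f)) ≫ adj.counit.app B)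
      exact ⟨asIso (π.map (Abelian.image.ι (ω.map f)) ≫ adj.counit.app B)⟩
    · intro ι f hf
      refine ⟨∐ fun i => ω.obj (f i), hZw.sigma_mem _ fun i => (key _).1 (hf i), ⟨?_⟩⟩
      exact PreservesCoproduct.iso π _ ≪≫
        Limits.Sigma.mapIso (fun i => asIso (adj.counit.app (f i)))
    · intro ι f hf
      rw [key]
      exact hZw.iso_mem (PreservesProduct.iso ω f).symm (hZp _ fun i => (key _).1 (hf i))
    · apply Set.Subset.antisymm
      · apply generatedBy_subset hZw
        rintro M ⟨hM, hMt⟩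
        have := hMt.mono_unit adj hker
        exact hZw.mem_of_mono (adj.unit.app M) this ((key _).1 hM)
      · refine hZt.trans (generatedBy_mono ?_)
        rintro M ⟨hM, hMt⟩
        exact ⟨⟨M, hM, ⟨Iso.refl _⟩⟩, hMt⟩
  · rintro W ⟨hWw, hWp⟩
    have tf := mem_tf_iff adj hker hWw
    have hprod : ∀ {ι : Type v} (f : ι → X),
        (∀ i, f i ∈ preimageSub π W ∧ IsTorsionFree Y (f i)) →
        (∏ᶜ f) ∈ preimageSub π W ∧ IsTorsionFree Y (∏ᶜ f) := by
      intro ι f hf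
      have hf' := fun i => (tf _).1 (hf i)
      choose N hN g hg using hf'
      refine (tf _).2 ⟨∏ᶜ N, hWp _ hN, Limits.Pi.map g ≫ (PreservesProduct.iso ω N).inv, mono_comp _ _⟩
    have hsub : ∀ {A M : X} (f : A ⟶ M), Mono f →
        (M ∈ preimageSub π W ∧ IsTorsionFree Y M) →
        (A ∈ preimageSub π W ∧ IsTorsionFree Y A) := by
      intro A M f hf hM
      obtain ⟨N, hN, g, hg⟩ := (tf _).1 hM
      exact (tf _).2 ⟨N, hN, f ≫ g, mono_comp _ _⟩
    have hmem : ∀ M : X, M ∈ torsPart Y (preimageSub π W) ↔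
        ∃ G : X, (G ∈ preimageSub π W ∧ IsTorsionFree Y G) ∧ ∃ p : G ⟶ M, Epi p := by
      intro M
      constructor
      · rintro ⟨ι, f, hf, p, hp⟩
        obtain ⟨m, hm⟩ := exists_mono_sigma_pi f
        exact ⟨_, hsub m hm (hprod f hf), p, hp⟩
      · rintro ⟨G, hG, p, hp⟩
        exact generatedBy_epi p (subset_generatedBy hG)
    have hω : ∀ N ∈ W, ω.obj N ∈ preimageSub π W ∧ IsTorsionFree Y (ω.obj N) :=
      fun N hN => (tf _).2 ⟨N, hN, 𝟙 _, inferInstance⟩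
    have hπ : ∀ M ∈ torsPart Y (preimageSub π W), π.obj M ∈ W := by
      intro M hM
      obtain ⟨G, hG, p, hp⟩ := (hmem M).1 hM
      exact hWw.mem_of_epi (π.map p) inferInstance hG.1
    refine ⟨⟨⟨⟨?_, ?_, ?_⟩, ?_⟩, ?_, ?_⟩, ?_⟩
    · intro A M f hf hM
      obtain ⟨G, hG, p, hp⟩ := (hmem M).1 hM
      exact (hmem A).2 ⟨pullback p f, hsub (pullback.fst p f) inferInstance hG,
        pullback.snd p f, inferInstance⟩
    · intro M B f hf hM
      exact generatedBy_epi f hM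
    · intro ι f hf
      choose G hG p hp using fun i => (hmem _).1 (hf i)
      obtain ⟨m, hm⟩ := exists_mono_sigma_pi G
      exact (hmem _).2 ⟨∐ G, hsub m hm (hprod G hG), Limits.Sigma.map p, inferInstance⟩
    · intro ι f hf
      choose G hG p hp using fun i => (hmem _).1 (hf i)
      exact (hmem _).2 ⟨∏ᶜ G, hprod G hG, Limits.Pi.map p, epi_pi_map p hp⟩
    · intro M hM
      exact subset_generatedBy (hω _ (hπ M hM))
    · refine generatedBy_mono ?_
      intro M hM
      exact ⟨subset_generatedBy hM, hM.2⟩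
    · apply Set.Subset.antisymm
      · rintro N ⟨M, hM, ⟨e⟩⟩
        exact hWw.iso_mem e (hπ M hM)
      · intro N hN
        exact ⟨ω.obj N, subset_generatedBy (hω N hN), ⟨asIso (adj.counit.app N)⟩⟩


end Paper
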